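/- Let A1 and A2 be circulant Hermitian N×N complex matrices. Then there exist unitary N×N matrices V1 and V2 and diagonal matrices Λ1 and Λ2 such that A1 = V1 Λ1 V1ᴴ, A2 = V2 Λ2 V2ᴴ, and V1·V2 = I. Consequently, the infimum over all such unitary eigenvector matrices V1 of A1 and V2 of A2 of the Frobenius norm ‖V1·V2 − I‖_F equals 0 (any circulant graph is a dual of any circulant graph). -/

import Mathlib

open Matrix

/-- Frobenius norm of a complex square matrix. -/
noncomputable def frobNorm {N : ℕ} (M : Matrix (Fin N) (Fin N) ℂ) : ℝ :=
  Real.sqrt (∑ i, ∑ j, ‖M i j‖ ^ 2)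

/-- Fourier-type matrix attached to an additive character. -/
noncomputable def fourMat {n : ℕ} (ψ : AddChar (ZMod (n+1)) ℂ) :
    Matrix (ZMod (n+1)) (ZMod (n+1)) ℂ :=
  Matrix.of fun i j => (((Real.sqrt ((n:ℝ)+1))⁻¹ : ℝ) : ℂ) * ψ (i * j)

lemma fourMat_circ {n : ℕ} (ψ : AddChar (ZMod (n+1)) ℂ) (v : ZMod (n+1) → ℂ) :
    Matrix.circulant v * fourMat ψ
      = fourMat ψ * Matrix.diagonal (fun k => ∑ j, v j * ψ (-(j * k))) := by
  ext i k
  rw [Matrix.mul_diagonal, Matrix.mul_apply, Finset.mul_sum]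
  refine Fintype.sum_equiv (Equiv.subLeft i) _ _ fun j => ?_
  simp only [Matrix.circulant_apply, fourMat, Matrix.of_apply, Equiv.subLeft_apply]
  have : ψ (j * k) = ψ (i * k) * ψ (-((i - j) * k)) := by
    rw [← AddChar.map_add_eq_mul]
    congr 1
    ring
  rw [this]
  ring

lemma fourMat_conj {n : ℕ} (ψ : AddChar (ZMod (n+1)) ℂ) : (fourMat ψ)ᴴ = fourMat ψ⁻¹ := by
  ext i j
  simp only [Matrix.conjTranspose_apply, fourMat, Matrix.of_apply, star_mul']
  rw [mul_comm j i]
  congr 1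
  · simp [Complex.conj_ofReal]
  · rw [AddChar.inv_apply, AddChar.map_neg_eq_conj]
    rfl

lemma fourMat_mul {n : ℕ} (ψ : AddChar (ZMod (n+1)) ℂ) (hψ : ψ.IsPrimitive) :
    fourMat ψ * fourMat ψ⁻¹ = 1 := by
  ext i k
  have hc : (((Real.sqrt ((n:ℝ)+1))⁻¹ : ℝ) : ℂ) * (((Real.sqrt ((n:ℝ)+1))⁻¹ : ℝ) : ℂ)
      = ((n:ℂ)+1)⁻¹ := by
    rw [← Complex.ofReal_mul, ← mul_inv, Real.mul_self_sqrt (by positivity)]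
    push_cast
    rfl
  have hn : ((n:ℂ)+1) ≠ 0 := Nat.cast_add_one_ne_zero n
  have key : ∀ j, fourMat ψ i j * fourMat ψ⁻¹ j k = ((n:ℂ)+1)⁻¹ * ψ (j * (i - k)) := by
    intro j
    have : ψ (j * (i - k)) = ψ (i * j) * ψ (-(j * k)) := by
      rw [← AddChar.map_add_eq_mul]
      congr 1
      ring
    simp only [fourMat, Matrix.of_apply, AddChar.inv_apply]
    rw [this, ← hc]
    ring
  rw [Matrix.mul_apply, Finset.sum_congr rfl (fun j _ => key j), ← Finset.mul_sum,
    AddChar.sum_mulShift (i - k) hψ, Matrix.one_apply, ZMod.card]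
  simp only [sub_eq_zero]
  split_ifs
  · push_cast
    exact inv_mul_cancel₀ hn
  · simp

lemma circ_aux {n : ℕ} (v w : ZMod (n+1) → ℂ) :
    ∃ V1 V2 Λ1 Λ2 : Matrix (ZMod (n+1)) (ZMod (n+1)) ℂ,
      V1ᴴ * V1 = 1 ∧ V2ᴴ * V2 = 1 ∧ Λ1.IsDiag ∧ Λ2.IsDiag ∧
      Matrix.circulant v = V1 * Λ1 * V1ᴴ ∧ Matrix.circulant w = V2 * Λ2 * V2ᴴ ∧ V1 * V2 = 1 := by
  set ψ : AddChar (ZMod (n+1)) ℂ := ZMod.stdAddChar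
  have h : fourMat ψ * fourMat ψ⁻¹ = 1 := fourMat_mul ψ (ZMod.isPrimitive_stdAddChar _)
  have h' : fourMat ψ⁻¹ * fourMat ψ = 1 := mul_eq_one_comm.mp h
  refine ⟨fourMat ψ, fourMat ψ⁻¹, Matrix.diagonal (fun k => ∑ j, v j * ψ (-(j * k))),
    Matrix.diagonal (fun k => ∑ j, w j * ψ⁻¹ (-(j * k))), ?_, ?_, Matrix.isDiag_diagonal _,
    Matrix.isDiag_diagonal _, ?_, ?_, h⟩
  · rw [fourMat_conj, h']
  · rw [fourMat_conj, inv_inv, h]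
  · rw [← fourMat_circ ψ v, fourMat_conj, Matrix.mul_assoc, h, Matrix.mul_one]
  · rw [← fourMat_circ ψ⁻¹ w, fourMat_conj, inv_inv, Matrix.mul_assoc, h', Matrix.mul_one]

/-- Any circulant (Hermitian) graph is a dual of any circulant (Hermitian) graph:
there are unitary eigenvector matrices `V1` of `A1` and `V2` of `A2` with `V1 * V2 = I`,
and hence the dualness (infimum of `‖V1 V2 − I‖_F`) is `0`. -/
theorem circulant_dual_circulant {N : ℕ} (A1 A2 : Matrix (Fin N) (Fin N) ℂ)
    (h1 : ∃ v : Fin N → ℂ, A1 = Matrix.circulant v)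
    (h2 : ∃ v : Fin N → ℂ, A2 = Matrix.circulant v)
    (hH1 : A1.IsHermitian) (hH2 : A2.IsHermitian) :
    (∃ V1 V2 Λ1 Λ2 : Matrix (Fin N) (Fin N) ℂ,
      V1ᴴ * V1 = 1 ∧ V2ᴴ * V2 = 1 ∧ Λ1.IsDiag ∧ Λ2.IsDiag ∧
      A1 = V1 * Λ1 * V1ᴴ ∧ A2 = V2 * Λ2 * V2ᴴ ∧ V1 * V2 = 1) ∧
    sInf {x : ℝ | ∃ V1 V2 Λ1 Λ2 : Matrix (Fin N) (Fin N) ℂ,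
      V1ᴴ * V1 = 1 ∧ V2ᴴ * V2 = 1 ∧ Λ1.IsDiag ∧ Λ2.IsDiag ∧
      A1 = V1 * Λ1 * V1ᴴ ∧ A2 = V2 * Λ2 * V2ᴴ ∧ x = frobNorm (V1 * V2 - 1)} = 0 := by
  have main : ∃ V1 V2 Λ1 Λ2 : Matrix (Fin N) (Fin N) ℂ,
      V1ᴴ * V1 = 1 ∧ V2ᴴ * V2 = 1 ∧ Λ1.IsDiag ∧ Λ2.IsDiag ∧
      A1 = V1 * Λ1 * V1ᴴ ∧ A2 = V2 * Λ2 * V2ᴴ ∧ V1 * V2 = 1 := by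
    obtain ⟨v, rfl⟩ := h1
    obtain ⟨w, rfl⟩ := h2
    cases N with
    | zero =>
      exact ⟨1, 1, 1, 1, Subsingleton.elim _ _, Subsingleton.elim _ _, fun i => i.elim0,
        fun i => i.elim0, Subsingleton.elim _ _, Subsingleton.elim _ _, Subsingleton.elim _ _⟩
    | succ n => exact circ_aux (n := n) v w
  refine ⟨main, le_antisymm ?_ ?_⟩
  · obtain ⟨V1, V2, L1, L2, a, b, c, d, e, f, g⟩ := main
    refine csInf_le ⟨0, ?_⟩ ⟨V1, V2, L1, L2, a, b, c, d, e, f, ?_⟩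
    · rintro x ⟨_, _, _, _, _, _, _, _, _, _, rfl⟩
      exact Real.sqrt_nonneg _
    · rw [g]
      simp [frobNorm]
  · refine Real.sInf_nonneg ?_
    rintro x ⟨_, _, _, _, _, _, _, _, _, _, rfl⟩
    exact Real.sqrt_nonneg _
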